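/- Let μ > 0 and let u, B : ℝ × ℝ³ → ℝ³ be smooth (jointly in (t,x)) such that for every t, div u(t,·) = 0 and div B(t,·) = 0 on ℝ³, and the induction equation ∂ₜB − μΔB = curl(u × B) holds at every (t,x) ∈ ℝ × ℝ³. Assume that for every t, u(t,·) satisfies the Navier-slip boundary condition (u₃ = ∂₃u₁ = ∂₃u₂ = 0 on ∂Ω) and B(t,·) satisfies the insulating boundary condition (B₁ = B₂ = 0 on ∂Ω). Then for every t, ΔB(t,·) × n = 0 on ∂Ω; that is, (ΔB)₁(t,x) = (ΔB)₂(t,x) = 0 for every t and every x ∈ ∂Ω. -/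

import Mathlib

noncomputable section

open MeasureTheory

/-- Points/vectors in ℝ³, indexed by `Fin 3` (so index `0,1,2` stand for coordinates `1,2,3`). -/
abbrev V3 : Type := Fin 3 → ℝ

/-- Partial derivative in the `i`-th coordinate direction. -/
def pd (i : Fin 3) (f : V3 → ℝ) (x : V3) : ℝ := fderiv ℝ f x (Pi.single i 1)

/-- Divergence of a vector field. -/
def vdiv (u : V3 → V3) (x : V3) : ℝ :=
  pd 0 (fun y => u y 0) x + pd 1 (fun y => u y 1) x + pd 2 (fun y => u y 2) x

/-- Curl of a vector field. -/
def vcurl (u : V3 → V3) (x : V3) : V3 :=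
  ![pd 1 (fun y => u y 2) x - pd 2 (fun y => u y 1) x,
    pd 2 (fun y => u y 0) x - pd 0 (fun y => u y 2) x,
    pd 0 (fun y => u y 1) x - pd 1 (fun y => u y 0) x]

/-- Laplacian of a scalar function. -/
def lap (f : V3 → ℝ) (x : V3) : ℝ :=
  pd 0 (pd 0 f) x + pd 1 (pd 1 f) x + pd 2 (pd 2 f) x

/-- Componentwise Laplacian of a vector field. -/
def vlap (u : V3 → V3) (x : V3) : V3 := fun i => lap (fun y => u y i) x

/-- Advective derivative `(u·∇)V`. -/
def adv (u V : V3 → V3) (x : V3) : V3 := fun i =>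
  u x 0 * pd 0 (fun y => V y i) x + u x 1 * pd 1 (fun y => V y i) x +
    u x 2 * pd 2 (fun y => V y i) x

/-- Cross product in ℝ³. -/
def cross (a b : V3) : V3 :=
  ![a 1 * b 2 - a 2 * b 1, a 2 * b 0 - a 0 * b 2, a 0 * b 1 - a 1 * b 0]

/-- Dot product in ℝ³. -/
def dot (a b : V3) : ℝ := a 0 * b 0 + a 1 * b 1 + a 2 * b 2

/-- Gradient of a scalar function. -/
def grad (f : V3 → ℝ) (x : V3) : V3 := fun i => pd i f x

/-- The boundary `∂Ω = {x : x₃ = 0 or x₃ = 1}`. -/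
def onBdry (x : V3) : Prop := x 2 = 0 ∨ x 2 = 1

/-- Horizontal periodicity (period 1 in x₁ and x₂) of a scalar function. -/
def hperS (f : V3 → ℝ) : Prop :=
  (∀ x, f (x + Pi.single 0 1) = f x) ∧ (∀ x, f (x + Pi.single 1 1) = f x)

/-- Horizontal periodicity (period 1 in x₁ and x₂) of a vector field. -/
def hperV (u : V3 → V3) : Prop :=
  (∀ x, u (x + Pi.single 0 1) = u x) ∧ (∀ x, u (x + Pi.single 1 1) = u x)

/-- The unit cube `Q = [0,1]³`. -/
def Q3 : Set V3 := Set.Icc 0 1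

/-! On `∂Ω` the tangential components of `B` vanish for all times, hence so do their time
derivatives and their tangential space derivatives. In the identity
`curl (u × B) = (B·∇)u − (u·∇)B + (div B) u − (div u) B` every term therefore has zero tangential
part: the only surviving contributions `B₃ ∂₃uᵢ` and `u₃ ∂₃Bᵢ` (`i = 1, 2`) are killed by the
Navier-slip condition. The induction equation then reads `−μ (ΔB)ᵢ = 0`. -/

theorem fderiv_apply_eq_zero_of_const_on_line {𝕜 E F : Type*} [NontriviallyNormedField 𝕜]
    [NormedAddCommGroup E] [NormedSpace 𝕜 E] [NormedAddCommGroup F] [NormedSpace 𝕜 F]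
    {f : E → F} {x v : E} {c : F} (hf : DifferentiableAt 𝕜 f x)
    (hline : ∀ s : 𝕜, f (x + s • v) = c) : fderiv 𝕜 f x v = 0 := by
  rw [← hf.lineDeriv_eq_fderiv]
  simp only [lineDeriv, hline, deriv_const]

section PartialDerivatives

variable {f g : V3 → ℝ} {x : V3}

theorem pd_sub (i : Fin 3) (hf : DifferentiableAt ℝ f x) (hg : DifferentiableAt ℝ g x) :
    pd i (fun y => f y - g y) x = pd i f x - pd i g x := by
  simp only [pd, fderiv_fun_sub hf hg, sub_apply]

theorem pd_mul (i : Fin 3) (hf : DifferentiableAt ℝ f x) (hg : DifferentiableAt ℝ g x) :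
    pd i (fun y => f y * g y) x = f x * pd i g x + g x * pd i f x := by
  simp only [pd, fderiv_fun_mul hf hg, add_apply,
    smul_apply, smul_eq_mul]

theorem pd_mul_sub_mul (i : Fin 3) {h k : V3 → ℝ}
    (hf : DifferentiableAt ℝ f x) (hg : DifferentiableAt ℝ g x)
    (hh : DifferentiableAt ℝ h x) (hk : DifferentiableAt ℝ k x) :
    pd i (fun y => f y * g y - h y * k y) x =
      f x * pd i g x + g x * pd i f x - (h x * pd i k x + k x * pd i h x) := by
  rw [pd_sub i (hf.fun_mul hg) (hh.fun_mul hk), pd_mul i hf hg, pd_mul i hh hk]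

theorem onBdry.add_smul_single {i : Fin 3} (hx : onBdry x) (hi : i ≠ 2) (s : ℝ) :
    onBdry (x + s • Pi.single i 1) := by
  simpa [onBdry, Pi.single_eq_of_ne hi.symm] using hx

theorem pd_eq_zero_of_forall_onBdry {i : Fin 3} (hf : DifferentiableAt ℝ f x) (hi : i ≠ 2)
    (hzero : ∀ y, onBdry y → f y = 0) (hx : onBdry x) : pd i f x = 0 :=
  fderiv_apply_eq_zero_of_const_on_line hf fun s => hzero _ (hx.add_smul_single hi s)

end PartialDerivatives

theorem vcurl_cross {u B : V3 → V3} {x : V3}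
    (hu : DifferentiableAt ℝ u x) (hB : DifferentiableAt ℝ B x) :
    vcurl (fun y => cross (u y) (B y)) x =
      adv B u x - adv u B x + vdiv B x • u x - vdiv u x • B x := by
  have hu := differentiableAt_pi.1 hu
  have hB := differentiableAt_pi.1 hB
  have pd_minor (k i j : Fin 3) : pd k (fun y => u y i * B y j - u y j * B y i) x =
      u x i * pd k (fun y => B y j) x + B x j * pd k (fun y => u y i) x
        - (u x j * pd k (fun y => B y i) x + B x i * pd k (fun y => u y j) x) :=
    pd_mul_sub_mul k (hu i) (hB j) (hu j) (hB i)
  ext i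
  fin_cases i <;>
    simp only [vcurl, cross, adv, vdiv, pd_minor, Matrix.cons_val, Fin.zero_eta, Fin.mk_one,
      Fin.reduceFinMk, Pi.add_apply, Pi.sub_apply, Pi.smul_apply, smul_eq_mul] <;>
    ring

/-- The Navier-slip boundary condition `u · n = 0`, `(curl u) × n = 0` on `∂Ω`, in its equivalent
coordinate form `u₃ = ∂₃u₁ = ∂₃u₂ = 0`. -/
def NavierSlip (u : V3 → V3) : Prop :=
  ∀ x, onBdry x → u x 2 = 0 ∧ pd 2 (fun y => u y 0) x = 0 ∧ pd 2 (fun y => u y 1) x = 0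

/-- The insulating boundary condition `B × n = 0` on `∂Ω`: the components of `B` tangential
to the boundary planes vanish there. -/
def Insulating (B : V3 → V3) : Prop :=
  ∀ x, onBdry x → B x 0 = 0 ∧ B x 1 = 0

section BoundaryConditions

variable {u B : V3 → V3} {x : V3} {i : Fin 3}

theorem NavierSlip.pd_two_eq_zero (hu : NavierSlip u) (hx : onBdry x) (hi : i ≠ 2) :
    pd 2 (fun y => u y i) x = 0 := by
  obtain ⟨-, h0, h1⟩ := hu x hx
  fin_cases i
  exacts [h0, h1, absurd rfl hi]

theorem Insulating.apply_eq_zero (hB : Insulating B) (hx : onBdry x) (hi : i ≠ 2) :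
    B x i = 0 := by
  obtain ⟨h0, h1⟩ := hB x hx
  fin_cases i
  exacts [h0, h1, absurd rfl hi]

theorem Insulating.adv_left_apply_eq_zero (hB : Insulating B) (hu : NavierSlip u)
    (hx : onBdry x) (hi : i ≠ 2) : adv B u x i = 0 := by
  obtain ⟨hB0, hB1⟩ := hB x hx
  simp only [adv, hB0, hB1, hu.pd_two_eq_zero hx hi, zero_mul, mul_zero, add_zero]

theorem Insulating.adv_right_apply_eq_zero (hB : Insulating B) (hdiff : DifferentiableAt ℝ B x)
    (hu : u x 2 = 0) (hx : onBdry x) (hi : i ≠ 2) : adv u B x i = 0 := by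
  have tangential_pd {j : Fin 3} (hj : j ≠ 2) : pd j (fun y => B y i) x = 0 :=
    pd_eq_zero_of_forall_onBdry (differentiableAt_pi.1 hdiff i) hj
      (fun _ hy => hB.apply_eq_zero hy hi) hx
  simp only [adv, tangential_pd (show (0 : Fin 3) ≠ 2 by decide),
    tangential_pd (show (1 : Fin 3) ≠ 2 by decide), hu, zero_mul, mul_zero, add_zero]

theorem vcurl_cross_apply_eq_zero (hu : DifferentiableAt ℝ u x) (hB : DifferentiableAt ℝ B x)
    (hdivB : vdiv B x = 0) (hubc : NavierSlip u) (hBbc : Insulating B)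
    (hx : onBdry x) (hi : i ≠ 2) : vcurl (fun y => cross (u y) (B y)) x i = 0 := by
  simp only [vcurl_cross hu hB, Pi.add_apply, Pi.sub_apply, Pi.smul_apply,
    hBbc.adv_left_apply_eq_zero hubc hx hi, hBbc.adv_right_apply_eq_zero hB (hubc x hx).1 hx hi,
    hdivB, hBbc.apply_eq_zero hx hi, smul_eq_mul, zero_mul, mul_zero, sub_zero, add_zero]

end BoundaryConditions

theorem stmt_7_general {mu t : ℝ} (hmu : mu ≠ 0) {u : V3 → V3} {B : ℝ → V3 → V3} {x : V3}
    {i : Fin 3} (hu : DifferentiableAt ℝ u x) (hB : ContDiffAt ℝ 2 (B t) x)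
    (hdivB : vdiv (B t) x = 0)
    (hind : deriv (fun s => B s x i) t - mu * vlap (B t) x i =
      vcurl (fun y => cross (u y) (B t y)) x i)
    (hubc : NavierSlip u) (hBbc : ∀ s, Insulating (B s)) (hx : onBdry x) (hi : i ≠ 2) :
    vlap (B t) x i = 0 := by
  have time_deriv : deriv (fun s => B s x i) t = 0 := by
    simp only [(hBbc _).apply_eq_zero hx hi, deriv_const]
  have curl_term : vcurl (fun y => cross (u y) (B t y)) x i = 0 :=
    vcurl_cross_apply_eq_zero hu (hB.differentiableAt two_ne_zero) hdivB hubc (hBbc t) hx hi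
  simpa [time_deriv, curl_term, hmu] using hind

theorem contDiff_slice_of_uncurry {𝕜 D E F : Type*} [NontriviallyNormedField 𝕜]
    [NormedAddCommGroup D] [NormedSpace 𝕜 D] [NormedAddCommGroup E] [NormedSpace 𝕜 E]
    [NormedAddCommGroup F] [NormedSpace 𝕜 F] {n : WithTop ℕ∞} {f : D → E → F}
    (hf : ContDiff 𝕜 n (Function.uncurry f)) (t : D) : ContDiff 𝕜 n (f t) :=
  hf.comp (contDiff_prodMk_right t)

/-- If `(u,B)` is a smooth solution of the induction equation `∂ₜB − μΔB = curl(u × B)`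
with divergence-free `u(t,·)`, `B(t,·)`, the Navier-slip b.c. for `u` and the insulating
b.c. for `B`, then `ΔB(t,·) × n = 0` on `∂Ω` for every `t`. -/
theorem stmt_7 (mu : ℝ) (hmu : 0 < mu) (u B : ℝ → V3 → V3)
    (hu : ContDiff ℝ (⊤ : ℕ∞) (Function.uncurry u))
    (hB : ContDiff ℝ (⊤ : ℕ∞) (Function.uncurry B))
    (hdivu : ∀ t x, vdiv (u t) x = 0) (hdivB : ∀ t x, vdiv (B t) x = 0)
    (hind : ∀ t x (i : Fin 3),
      deriv (fun s => B s x i) t - mu * vlap (B t) x i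
        = vcurl (fun y => cross (u t y) (B t y)) x i)
    (hubc : ∀ t x, onBdry x →
      u t x 2 = 0 ∧ pd 2 (fun y => u t y 0) x = 0 ∧ pd 2 (fun y => u t y 1) x = 0)
    (hBbc : ∀ t x, onBdry x → B t x 0 = 0 ∧ B t x 1 = 0) :
    ∀ t x, onBdry x → vlap (B t) x 0 = 0 ∧ vlap (B t) x 1 = 0 := by
  intro t x hx
  have vlap_eq_zero {i : Fin 3} (hi : i ≠ 2) : vlap (B t) x i = 0 :=
    stmt_7_general hmu.ne' ((contDiff_slice_of_uncurry hu t).differentiable (by simp) x)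
      (contDiff_slice_of_uncurry (contDiff_infty.1 hB 2) t).contDiffAt
      (hdivB t x) (hind t x i) (hubc t) hBbc hx hi
  exact ⟨vlap_eq_zero (by decide), vlap_eq_zero (by decide)⟩
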